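/- arXiv:1412.4198 — 6 statements merged into one kernel-verified Lean document; each statement's English description precedes it below -/
import Mathlib

section
/- Let A be a finite two-player zero-sum game with row set R and column set C, and let R1 × C1 and R2 × C2 be weak saddles of A. Then R1 × C2 and R2 × C1 are also weak saddles of A (interchangeability). -/
/-!
Dominance is witnessed by maps: `f₁ : R → R1` and `g₁ : C → C1` for the first
saddle, `f₂ : R → R2` and `g₂ : C → C2` for the second. Put `φ = f₁ ∘ f₂` and `γ = g₁ ∘ g₂`.
For `r ∈ R1` and `c ∈ C1`, chaining the dominance inequalities gives
`a r (γ c) ≤ a r (g₂ c) ≤ a (f₂ r) (g₂ c) ≤ a (f₂ r) c ≤ a (φ r) c`.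

Iterating, `a r (γⁿ c) ≤ a (φⁿ r) c`. If `n > 0` is such that `φⁿ` and `γⁿ` are both idempotent,
this says that `φⁿ(R1) × γⁿ(C1)` is a weak GSP inside `R1 × C1`, so by minimality `φⁿ` and `γⁿ`
are the identity on `R1` and `C1`. Hence the chain is a cycle of inequalities and all its members
are equal (`IsWeakSaddle.cycle`). By symmetry, the maps `fᵢ` and `gᵢ` are bijections between the
two saddles that preserve the relevant payoffs, so `R1 × C2` inherits being a weak GSP from both
saddles, and a weak GSP inside it is carried by `f₂` to one inside `R2 × C2`, which gives
minimality.
-/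

/-- `R1` weakly dominates the set of rows `R2` with respect to the columns `C'`:
every row in `R2` is weakly dominated by some row in `R1`. -/
def RowsWeaklyDominate {R C : Type*} (a : R → C → ℝ) (C' : Finset C)
    (R1 R2 : Finset R) : Prop :=
  ∀ r2 ∈ R2, ∃ r1 ∈ R1, ∀ c ∈ C', a r2 c ≤ a r1 c

/-- `C1` weakly dominates the set of columns `C2` with respect to the rows `R'`. -/
def ColsWeaklyDominate {R C : Type*} (a : R → C → ℝ) (R' : Finset R)
    (C1 C2 : Finset C) : Prop :=
  ∀ c2 ∈ C2, ∃ c1 ∈ C1, ∀ r ∈ R', a r c1 ≤ a r c2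

/-- `R' × C'` is a weak generalized saddle point of the game `a`: `R'` and `C'` are
nonempty, `R'` weakly dominates `R \ R'` w.r.t. `C'`, and `C'` weakly dominates
`C \ C'` w.r.t. `R'`. -/
def IsWeakGSP {R C : Type*} [Fintype R] [Fintype C] [DecidableEq R] [DecidableEq C]
    (a : R → C → ℝ) (R' : Finset R) (C' : Finset C) : Prop :=
  R'.Nonempty ∧ C'.Nonempty ∧
  RowsWeaklyDominate a C' R' (Finset.univ \ R') ∧
  ColsWeaklyDominate a R' C' (Finset.univ \ C')

/-- `R' × C'` is a weak saddle: a weak GSP none of whose proper (nonempty) subproducts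
is a weak GSP. -/
def IsWeakSaddle {R C : Type*} [Fintype R] [Fintype C] [DecidableEq R] [DecidableEq C]
    (a : R → C → ℝ) (R' : Finset R) (C' : Finset C) : Prop :=
  IsWeakGSP a R' C' ∧
  ∀ R'' C'', R'' ⊆ R' → C'' ⊆ C' → IsWeakGSP a R'' C'' → R'' = R' ∧ C'' = C'

/-- A weak GSP is a nonempty product such that every row (column), inside the product or not, is
dominated by one of the product. -/
lemma isWeakGSP_iff {R C : Type*} [Fintype R] [Fintype C] [DecidableEq R] [DecidableEq C]
    (a : R → C → ℝ) (R' : Finset R) (C' : Finset C) :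
    IsWeakGSP a R' C' ↔ R'.Nonempty ∧ C'.Nonempty ∧
      (∀ r, ∃ r' ∈ R', ∀ c ∈ C', a r c ≤ a r' c) ∧
      (∀ c, ∃ c' ∈ C', ∀ r ∈ R', a r c' ≤ a r c) := by
  unfold IsWeakGSP RowsWeaklyDominate ColsWeaklyDominate
  refine and_congr_right fun _ => and_congr_right fun _ =>
    and_congr ⟨fun h r => ?_, fun h r _ => h r⟩ ⟨fun h c => ?_, fun h c _ => h c⟩
  · by_cases hr : r ∈ R'
    · exact ⟨r, hr, fun _ _ => le_rfl⟩
    · exact h r (by simp [hr])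
  · by_cases hc : c ∈ C'
    · exact ⟨c, hc, fun _ _ => le_rfl⟩
    · exact h c (by simp [hc])

/-- If the iterates of `ψ` are periodic with period `p + 1` from exponent `i` on, then the iterate
at any multiple of the period beyond `i` is idempotent; `(i + 1) * (p + 1)` is one. -/
lemma iterate_idempotent {X : Type*} (ψ : X → X) (i p : ℕ) (hψ : ψ^[i] = ψ^[i + p + 1]) (x : X) :
    ψ^[(i + 1) * (p + 1)] (ψ^[(i + 1) * (p + 1)] x) = ψ^[(i + 1) * (p + 1)] x := by
  have per : ∀ t m, i ≤ m → ψ^[m + t * (p + 1)] = ψ^[m] := by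
    intro t
    induction t with
    | zero => intro m _; simp
    | succ t ih =>
      intro m hm
      obtain ⟨k, rfl⟩ := Nat.exists_eq_add_of_le hm
      have e : i + k + (t + 1) * (p + 1) = (k + (i + p + 1)) + t * (p + 1) := by ring
      rw [e, ih _ (by omega), Function.iterate_add, ← hψ, ← Function.iterate_add, add_comm k i]
  rw [← Function.iterate_add_apply, per _ _ (by nlinarith)]

/-- Two self-maps of finite types have a common positive exponent at which both iterates are
idempotent. -/
lemma exists_iterate_idempotent {R C : Type*} [Finite R] [Finite C] (φ : R → R) (γ : C → C) :
    ∃ n, 0 < n ∧ (∀ r, φ^[n] (φ^[n] r) = φ^[n] r) ∧ (∀ c, γ^[n] (γ^[n] c) = γ^[n] c) := by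
  obtain ⟨i, j, hij, h⟩ :=
    Finite.exists_ne_map_eq_of_infinite (fun n : ℕ => ((φ^[n], γ^[n]) : (R → R) × (C → C)))
  wlog hlt : i < j generalizing i j
  · exact this j i hij.symm h.symm (by omega)
  obtain ⟨p, rfl⟩ := Nat.exists_eq_add_of_lt hlt
  exact ⟨(i + 1) * (p + 1), by positivity, iterate_idempotent φ i p (congrArg Prod.fst h),
    iterate_idempotent γ i p (congrArg Prod.snd h)⟩

/-- Self-maps `φ`, `γ` of a weak saddle with `a r (γ c) ≤ a (φ r) c` are of finite order on it,
and the inequality is an equality. -/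
lemma IsWeakSaddle.cycle {R C : Type*} [Fintype R] [Fintype C] [DecidableEq R] [DecidableEq C]
    {a : R → C → ℝ} {R1 : Finset R} {C1 : Finset C} (h : IsWeakSaddle a R1 C1)
    {φ : R → R} {γ : C → C} (hφ : ∀ r, φ r ∈ R1) (hγ : ∀ c, γ c ∈ C1)
    (hle : ∀ r ∈ R1, ∀ c ∈ C1, a r (γ c) ≤ a (φ r) c) :
    (∃ n, (∀ r ∈ R1, φ^[n] (φ r) = r) ∧ (∀ c ∈ C1, γ^[n] (γ c) = c)) ∧
    ∀ r ∈ R1, ∀ c ∈ C1, a r (γ c) = a (φ r) c := by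
  have hit : ∀ k, ∀ r ∈ R1, ∀ c ∈ C1, a r (γ^[k] c) ≤ a (φ^[k] r) c := by
    intro k
    induction k with
    | zero => intro r _ c _; exact le_rfl
    | succ k ih =>
      intro r hr c hc
      rw [Function.iterate_succ_apply γ, Function.iterate_succ_apply' φ]
      have hk : φ^[k] r ∈ R1 := by
        cases k with
        | zero => exact hr
        | succ k => rw [Function.iterate_succ_apply']; exact hφ _
      exact (ih r hr _ (hγ c)).trans (hle _ hk c hc)
  obtain ⟨n, hn, hφn, hγn⟩ := exists_iterate_idempotent φ γ
  obtain ⟨n, rfl⟩ := Nat.exists_eq_succ_of_ne_zero hn.ne'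
  have hφm : ∀ r, φ^[n + 1] r ∈ R1 := fun r => by
    rw [Function.iterate_succ_apply']; exact hφ _
  have hγm : ∀ c, γ^[n + 1] c ∈ C1 := fun c => by
    rw [Function.iterate_succ_apply']; exact hγ _
  obtain ⟨hR, hC, hrow, hcol⟩ := (isWeakGSP_iff a R1 C1).1 h.1
  obtain ⟨eR, eC⟩ := h.2 (R1.image φ^[n + 1]) (C1.image γ^[n + 1])
    (Finset.image_subset_iff.2 fun r _ => hφm r) (Finset.image_subset_iff.2 fun c _ => hγm c) <| by
      refine (isWeakGSP_iff _ _ _).2 ⟨hR.image _, hC.image _, fun r => ?_, fun c => ?_⟩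
      · obtain ⟨r', hr', hd⟩ := hrow r
        refine ⟨_, Finset.mem_image_of_mem _ hr', fun c hc => ?_⟩
        obtain ⟨c, -, rfl⟩ := Finset.mem_image.1 hc
        have := hit (n + 1) r' hr' _ (hγm c)
        rw [hγn] at this
        exact (hd _ (hγm c)).trans this
      · obtain ⟨c', hc', hd⟩ := hcol c
        refine ⟨_, Finset.mem_image_of_mem _ hc', fun r hr => ?_⟩
        obtain ⟨r, -, rfl⟩ := Finset.mem_image.1 hr
        have := hit (n + 1) _ (hφm r) c' hc'
        rw [hφn] at this
        exact this.trans (hd _ (hφm r))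
  -- An idempotent map is the identity on its image.
  have idR : ∀ r ∈ R1, φ^[n] (φ r) = r := by
    intro r hr
    rw [← eR] at hr
    obtain ⟨s, -, rfl⟩ := Finset.mem_image.1 hr
    exact hφn s
  have idC : ∀ c ∈ C1, γ^[n] (γ c) = c := by
    intro c hc
    rw [← eC] at hc
    obtain ⟨s, -, rfl⟩ := Finset.mem_image.1 hc
    exact hγn s
  refine ⟨⟨n, idR, idC⟩, fun r hr c hc => le_antisymm (hle r hr c hc) ?_⟩
  have := hit n (φ r) (hφ r) (γ c) (hγ c)
  rwa [idR r hr, idC c hc] at this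

/-- One half of interchangeability; the other half is the same with the saddles swapped. -/
lemma IsWeakSaddle.interchange {R C : Type*} [Fintype R] [Fintype C]
    [DecidableEq R] [DecidableEq C]
    {a : R → C → ℝ} {R1 R2 : Finset R} {C1 C2 : Finset C}
    (h1 : IsWeakSaddle a R1 C1) (h2 : IsWeakSaddle a R2 C2) : IsWeakSaddle a R1 C2 := by
  obtain ⟨nR1, nC1, row1, col1⟩ := (isWeakGSP_iff a R1 C1).1 h1.1
  obtain ⟨nR2, nC2, row2, col2⟩ := (isWeakGSP_iff a R2 C2).1 h2.1
  choose f1 hf1 df1 using row1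
  choose g1 hg1 dg1 using col1
  choose f2 hf2 df2 using row2
  choose g2 hg2 dg2 using col2
  obtain ⟨⟨n, idR1, idC1⟩, eq1⟩ := h1.cycle (φ := fun r => f1 (f2 r)) (γ := fun c => g1 (g2 c))
    (fun r => hf1 _) (fun c => hg1 _) fun r hr c hc =>
      (dg1 _ r hr).trans <| (df2 r _ (hg2 c)).trans <| (dg2 c _ (hf2 r)).trans (df1 _ c hc)
  obtain ⟨⟨m, idR2, idC2⟩, -⟩ := h2.cycle (φ := fun r => f2 (f1 r)) (γ := fun c => g2 (g1 c))
    (fun r => hf2 _) (fun c => hg2 _) fun r hr c hc =>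
      (dg2 _ r hr).trans <| (df1 r _ (hg1 c)).trans <| (dg1 c _ (hf1 r)).trans (df2 _ c hc)
  have injf2 : ∀ r ∈ R1, ∀ s ∈ R1, f2 r = f2 s → r = s := fun r hr s hs e => by
    rw [← idR1 r hr, ← idR1 s hs]; simp only [e]
  have injg1 : Set.InjOn g1 C2 := fun c hc d hd e => by
    rw [← idC2 c hc, ← idC2 d hd]; simp only [e]
  have injf1 : Set.InjOn f1 R2 := fun c hc d hd e => by
    rw [← idR2 c hc, ← idR2 d hd]; simp only [e]
  have injg2 : Set.InjOn g2 C1 := fun c hc d hd e => by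
    rw [← idC1 c hc, ← idC1 d hd]; simp only [e]
  -- The mutual injections between finite sets are bijections.
  have cardR : R2.card ≤ R1.card := Finset.card_le_card_of_injOn f1 (fun r _ => hf1 r) injf1
  have cardC : C2.card ≤ C1.card := Finset.card_le_card_of_injOn g1 (fun c _ => hg1 c) injg1
  have cardC' : C1.card ≤ C2.card := Finset.card_le_card_of_injOn g2 (fun c _ => hg2 c) injg2
  have surf2 : ∀ s ∈ R2, ∃ r ∈ R1, f2 r = s := fun s hs => by
    obtain ⟨r, hr, e⟩ := Finset.surj_on_of_inj_on_of_card_le (fun r _ => f2 r) (fun r _ => hf2 r)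
      (fun r s hr hs e => injf2 r hr s hs e) cardR s hs
    exact ⟨r, hr, e.symm⟩
  have surg1 : ∀ d ∈ C1, ∃ c ∈ C2, g1 c = d := fun d hd => by
    obtain ⟨r, hr, e⟩ := Finset.surj_on_of_inj_on_of_card_le (fun r _ => g1 r) (fun r _ => hg1 r)
      (fun r s hr hs e => injg1 hr hs e) cardC' d hd
    exact ⟨r, hr, e.symm⟩
  have surg2 : ∀ d ∈ C2, ∃ c ∈ C1, g2 c = d := fun d hd => by
    obtain ⟨r, hr, e⟩ := Finset.surj_on_of_inj_on_of_card_le (fun r _ => g2 r) (fun r _ => hg2 r)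
      (fun r s hr hs e => injg2 hr hs e) cardC d hd
    exact ⟨r, hr, e.symm⟩
  -- The chain of inequalities collapses, giving payoff preservation on `R1 × C2`.
  have eqf : ∀ r ∈ R1, ∀ c ∈ C2, a (f2 r) c = a r c := fun r hr d hd => by
    obtain ⟨c, hc, rfl⟩ := surg2 d hd
    have e := eq1 r hr c hc
    linarith [dg1 (g2 c) r hr, df2 r _ (hg2 c), dg2 c _ (hf2 r), df1 (f2 r) c hc]
  have eqg : ∀ r ∈ R1, ∀ c ∈ C2, a r (g1 c) = a r c := fun r hr d hd => by
    obtain ⟨c, hc, rfl⟩ := surg2 d hd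
    have e := eq1 r hr c hc
    linarith [dg1 (g2 c) r hr, df2 r _ (hg2 c), dg2 c _ (hf2 r), df1 (f2 r) c hc]
  refine ⟨(isWeakGSP_iff _ _ _).2 ⟨nR1, nC2, fun r => ?_, fun c => ?_⟩, ?_⟩
  · obtain ⟨s, hs, e⟩ := surf2 (f2 r) (hf2 r)
    refine ⟨s, hs, fun c hc => ?_⟩
    rw [← eqf s hs c hc, e]
    exact df2 r c hc
  · obtain ⟨d, hd, e⟩ := surg1 (g1 c) (hg1 c)
    refine ⟨d, hd, fun r hr => ?_⟩
    rw [← eqg r hr d hd, e]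
    exact dg1 c r hr
  · intro R' C' hR' hC' h
    obtain ⟨nR', nC', row', col'⟩ := (isWeakGSP_iff _ _ _).1 h
    obtain ⟨eR, eC⟩ := h2.2 (R'.image f2) C' (Finset.image_subset_iff.2 fun r _ => hf2 r) hC' <| by
      refine (isWeakGSP_iff _ _ _).2 ⟨nR'.image _, nC', fun r => ?_, fun c => ?_⟩
      · obtain ⟨s, hs, hd⟩ := row' r
        refine ⟨_, Finset.mem_image_of_mem _ hs, fun c hc => ?_⟩
        rw [eqf s (hR' hs) c (hC' hc)]
        exact hd c hc
      · -- Payoffs are only preserved on columns of `C2`, so `c` is first replaced by `g2 c`.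
        obtain ⟨d, hd, hle⟩ := col' (g2 c)
        refine ⟨d, hd, fun r hr => ?_⟩
        obtain ⟨s, hs, rfl⟩ := Finset.mem_image.1 hr
        refine le_trans ?_ (dg2 c _ (hf2 s))
        rw [eqf s (hR' hs) d (hC' hd), eqf s (hR' hs) _ (hg2 c)]
        exact hle s hs
    refine ⟨Finset.Subset.antisymm hR' fun r hr => ?_, eC⟩
    have hm : f2 r ∈ R'.image f2 := by rw [eR]; exact hf2 r
    obtain ⟨s, hs, e⟩ := Finset.mem_image.1 hm
    rwa [← injf2 s (hR' hs) r hr e]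

theorem weakSaddle_interchangeable
    {R C : Type*} [Fintype R] [Fintype C] [Nonempty R] [Nonempty C]
    [DecidableEq R] [DecidableEq C]
    (a : R → C → ℝ) (R1 R2 : Finset R) (C1 C2 : Finset C)
    (h1 : IsWeakSaddle a R1 C1) (h2 : IsWeakSaddle a R2 C2) :
    IsWeakSaddle a R1 C2 ∧ IsWeakSaddle a R2 C1 :=
  ⟨h1.interchange h2, h2.interchange h1⟩
end

section
/- Let A be a finite two-player zero-sum game with row set R and column set C, and let R1 × C1 and R2 × C2 be weak saddles of A. Then there exist bijections σ : R1 → R2 and τ : C1 → C2 such that a_{σ(r), τ(c)} = a_{r,c} for all r ∈ R1 and c ∈ C1; that is, the subgame A restricted to R2 × C2 can be derived from the subgame A restricted to R1 × C1 by permuting rows and columns (equivalence). -/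
lemma exists_succ_pow_idempotent {M : Type*} [Monoid M] [Finite M] (x : M) :
    ∃ n : ℕ, x ^ (n + 1) * x ^ (n + 1) = x ^ (n + 1) := by
  obtain ⟨i, j, hij, h⟩ : ∃ i j : ℕ, i < j ∧ x ^ i = x ^ j := by
    obtain ⟨i, j, hne, h⟩ := Finite.exists_ne_map_eq_of_infinite (fun n : ℕ => x ^ n)
    rcases lt_or_gt_of_ne hne with hlt | hlt
    · exact ⟨i, j, hlt, h⟩
    · exact ⟨j, i, hlt, h.symm⟩
  obtain ⟨d, rfl⟩ := Nat.exists_eq_add_of_lt hij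
  -- From exponent `i` on, the powers of `x` have period `d + 1`.
  have period : ∀ m k, x ^ (i + m + k * (d + 1)) = x ^ (i + m) := by
    intro m k
    induction k with
    | zero => simp
    | succ k ih =>
      calc x ^ (i + m + (k + 1) * (d + 1))
          = x ^ (i + d + 1) * x ^ (m + k * (d + 1)) := by rw [← pow_add]; congr 1; ring
        _ = x ^ (i + m) := by rw [← h, ← pow_add, ← add_assoc, ih]
  -- The exponent `(i + 1) * (d + 1)` is a positive multiple of the period and is at least `i`.
  obtain ⟨m, hm⟩ : ∃ m, (i + 1) * (d + 1) = i + m := ⟨i * d + d + 1, by ring⟩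
  refine ⟨(i + 1) * (d + 1) - 1, ?_⟩
  rw [Nat.sub_add_cancel (Nat.mul_pos i.succ_pos d.succ_pos), ← pow_add]
  nth_rewrite 1 [hm]
  rw [period, hm]

section

variable {R C : Type*} [Fintype R] [Fintype C] [DecidableEq R] [DecidableEq C]
  {a : R → C → ℝ}

lemma IsWeakGSP.exists_row {R' : Finset R} {C' : Finset C} (h : IsWeakGSP a R' C') (r : R) :
    ∃ r' : R', ∀ c ∈ C', a r c ≤ a r' c := by
  by_cases hr : r ∈ R'
  · exact ⟨⟨r, hr⟩, fun _ _ => le_rfl⟩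
  · obtain ⟨r', hr', hd⟩ := h.2.2.1 r (by simp [hr])
    exact ⟨⟨r', hr'⟩, hd⟩

lemma IsWeakGSP.exists_col {R' : Finset R} {C' : Finset C} (h : IsWeakGSP a R' C') (c : C) :
    ∃ c' : C', ∀ r ∈ R', a r c' ≤ a r c := by
  by_cases hc : c ∈ C'
  · exact ⟨⟨c, hc⟩, fun _ _ => le_rfl⟩
  · obtain ⟨c', hc', hd⟩ := h.2.2.2 c (by simp [hc])
    exact ⟨⟨c', hc'⟩, hd⟩

/-- The idempotent case of `IsWeakSaddle.surjective`: the product of the images of `P` and `Q` is a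
weak GSP, because on it `P` improves rows and `Q` improves columns. -/
lemma IsWeakSaddle.surjective_of_idempotent {R' : Finset R} {C' : Finset C}
    (h : IsWeakSaddle a R' C') (P : R' → R') (Q : C' → C')
    (hP : ∀ r, P (P r) = P r) (hQ : ∀ c, Q (Q c) = Q c)
    (hPQ : ∀ (r : R') (c : C'), a r (Q c) ≤ a (P r) c) :
    Function.Surjective P ∧ Function.Surjective Q := by
  have hgsp : IsWeakGSP a (Finset.univ.image fun r => (P r : R))
      (Finset.univ.image fun c => (Q c : C)) := by
    obtain ⟨r₀, hr₀⟩ := h.1.1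
    obtain ⟨c₀, hc₀⟩ := h.1.2.1
    refine ⟨⟨_, Finset.mem_image_of_mem _ (Finset.mem_univ ⟨r₀, hr₀⟩)⟩,
      ⟨_, Finset.mem_image_of_mem _ (Finset.mem_univ ⟨c₀, hc₀⟩)⟩, ?_, ?_⟩
    · intro r _
      obtain ⟨r', hr'⟩ := h.1.exists_row r
      refine ⟨P r', Finset.mem_image_of_mem _ (Finset.mem_univ r'), ?_⟩
      intro c hc
      obtain ⟨c, -, rfl⟩ := Finset.mem_image.mp hc
      have := hPQ r' (Q c)
      rw [hQ] at this
      exact (hr' _ (Q c).2).trans this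
    · intro c _
      obtain ⟨c', hc'⟩ := h.1.exists_col c
      refine ⟨Q c', Finset.mem_image_of_mem _ (Finset.mem_univ c'), ?_⟩
      intro r hr
      obtain ⟨r, -, rfl⟩ := Finset.mem_image.mp hr
      have := hPQ (P r) c'
      rw [hP] at this
      exact this.trans (hc' _ (P r).2)
  obtain ⟨hR, hC⟩ := h.2 _ _ (by simp [Finset.image_subset_iff])
    (by simp [Finset.image_subset_iff]) hgsp
  constructor
  · rintro ⟨r, hr⟩
    rw [← hR] at hr
    obtain ⟨s, -, hs⟩ := Finset.mem_image.mp hr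
    exact ⟨s, Subtype.ext hs⟩
  · rintro ⟨c, hc⟩
    rw [← hC] at hc
    obtain ⟨s, -, hs⟩ := Finset.mem_image.mp hc
    exact ⟨s, Subtype.ext hs⟩

/-- Self-maps of a weak saddle that trade a column improvement against a row improvement are
surjective, by minimality of the saddle. -/
lemma IsWeakSaddle.surjective {R' : Finset R} {C' : Finset C}
    (h : IsWeakSaddle a R' C') (p : R' → R') (q : C' → C')
    (hpq : ∀ (r : R') (c : C'), a r (q c) ≤ a (p r) c) :
    Function.Surjective p ∧ Function.Surjective q := by
  have hiter : ∀ n (r : R') (c : C'), a r (q^[n] c) ≤ a (p^[n] r) c := by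
    intro n
    induction n with
    | zero => exact fun _ _ => le_rfl
    | succ n ih =>
      intro r c
      rw [Function.iterate_succ_apply', Function.iterate_succ_apply]
      exact (hpq _ _).trans (ih _ _)
  -- An idempotent power in the product monoid gives one exponent that serves both maps.
  have : Finite (Function.End R') := inferInstanceAs (Finite (R' → R'))
  have : Finite (Function.End C') := inferInstanceAs (Finite (C' → C'))
  obtain ⟨n, hn⟩ := exists_succ_pow_idempotent
    ((p, q) : Function.End R' × Function.End C')
  have hP (r : R') : p^[n + 1] (p^[n + 1] r) = p^[n + 1] r :=
    congrFun (congrArg Prod.fst hn) r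
  have hQ (c : C') : q^[n + 1] (q^[n + 1] c) = q^[n + 1] c :=
    congrFun (congrArg Prod.snd hn) c
  obtain ⟨hp, hq⟩ := h.surjective_of_idempotent _ _ hP hQ (hiter (n + 1))
  rw [Function.iterate_succ'] at hp hq
  exact ⟨hp.of_comp, hq.of_comp⟩

/-- Two weak GSPs admit a row map and a column map, in opposite directions, along which the payoff
does not decrease. -/
lemma IsWeakGSP.exists_maps {R1 R2 : Finset R} {C1 C2 : Finset C}
    (h1 : IsWeakGSP a R1 C1) (h2 : IsWeakGSP a R2 C2) :
    ∃ (φ : R1 → R2) (ψ : C2 → C1), ∀ (r : R1) (c : C2), a r (ψ c) ≤ a (φ r) c := by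
  choose φ hφ using fun r : R1 => h2.exists_row (r : R)
  choose ψ hψ using fun c : C2 => h1.exists_col (c : C)
  exact ⟨φ, ψ, fun r c => (hψ c r r.2).trans (hφ r c c.2)⟩

end

theorem weakSaddle_equivalence
    {R C : Type*} [Fintype R] [Fintype C] [Nonempty R] [Nonempty C]
    [DecidableEq R] [DecidableEq C]
    (a : R → C → ℝ) (R1 R2 : Finset R) (C1 C2 : Finset C)
    (h1 : IsWeakSaddle a R1 C1) (h2 : IsWeakSaddle a R2 C2) :
    ∃ (σ : {r // r ∈ R1} ≃ {r // r ∈ R2}) (τ : {c // c ∈ C1} ≃ {c // c ∈ C2}),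
      ∀ (r : {r // r ∈ R1}) (c : {c // c ∈ C1}),
        a (σ r : R) (τ c : C) = a (r : R) (c : C) := by
  obtain ⟨φ, ψ, hle⟩ := h1.1.exists_maps h2.1
  obtain ⟨φ', ψ', hle'⟩ := h2.1.exists_maps h1.1
  obtain ⟨hp, hq⟩ := h1.surjective (φ' ∘ φ) (ψ ∘ ψ')
    fun r c => (hle r (ψ' c)).trans (hle' (φ r) c)
  obtain ⟨hp', hq'⟩ := h2.surjective (φ ∘ φ') (ψ' ∘ ψ)
    fun r c => (hle' r (ψ c)).trans (hle (φ' r) c)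
  have hφ : Function.Bijective φ :=
    ⟨(Finite.injective_iff_surjective.mpr hp).of_comp, hp'.of_comp⟩
  have hψ : Function.Bijective ψ :=
    ⟨(Finite.injective_iff_surjective.mpr hq').of_comp, hq.of_comp⟩
  have hφ' : Function.Bijective φ' :=
    ⟨(Finite.injective_iff_surjective.mpr hp').of_comp, hp.of_comp⟩
  have hψ' : Function.Bijective ψ' :=
    ⟨(Finite.injective_iff_surjective.mpr hq).of_comp, hq'.of_comp⟩
  let e : R1 × C2 ≃ R1 × C1 := (Equiv.refl _).prodCongr (Equiv.ofBijective ψ hψ)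
  let f : R1 × C2 ≃ R2 × C2 := (Equiv.ofBijective φ hφ).prodCongr (Equiv.refl _)
  let e' : R2 × C1 ≃ R2 × C2 := (Equiv.refl _).prodCongr (Equiv.ofBijective ψ' hψ')
  let f' : R2 × C1 ≃ R1 × C1 := (Equiv.ofBijective φ' hφ').prodCongr (Equiv.refl _)
  -- Reindexed by `e'` and `f'`, the inequality `hle'` compares the two total payoffs.
  have hsum : ∑ x : R2 × C2, a x.1 x.2 ≤ ∑ x : R1 × C1, a x.1 x.2 := by
    rw [← e'.sum_comp, ← f'.sum_comp]
    exact Finset.sum_le_sum fun x _ => hle' x.1 x.2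
  rw [← e.sum_comp, ← f.sum_comp] at hsum
  have hterm : ∀ x ∈ (Finset.univ : Finset (R1 × C2)),
      a (e x).1 (e x).2 ≤ a (f x).1 (f x).2 := fun x _ => hle x.1 x.2
  have heq := (Finset.sum_eq_sum_iff_of_le hterm).mp ((Finset.sum_le_sum hterm).antisymm hsum)
  refine ⟨Equiv.ofBijective φ hφ, (Equiv.ofBijective ψ hψ).symm, fun r c => ?_⟩
  have hrc : a r (Equiv.ofBijective ψ hψ ((Equiv.ofBijective ψ hψ).symm c)) =
      a (φ r) ((Equiv.ofBijective ψ hψ).symm c) :=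
    heq (r, (Equiv.ofBijective ψ hψ).symm c) (Finset.mem_univ _)
  rw [Equiv.apply_symm_apply] at hrc
  exact hrc.symm
end

section
/- Let A be a finite two-player zero-sum game with row set R and column set C, and let R1 × C1 and R2 × C2 be weak saddles of A. Then |R1| = |R2| and |C1| = |C2|. -/
lemma end_pow_apply {R : Type*} (F : Function.End R) (m : ℕ) (r : R) :
    (F ^ m) r = Nat.iterate F m r := by
  induction m generalizing r with
  | zero => rfl
  | succ m ih => rw [pow_succ]; exact ih (F r)

/-- Every element of a finite monoid has an idempotent power with positive exponent. -/
lemma exists_pos_pow_idempotent {M : Type*} [Monoid M] [Finite M] (x : M) :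
    ∃ n, 0 < n ∧ x ^ n * x ^ n = x ^ n := by
  obtain ⟨i, j, hij, h⟩ := Finite.exists_ne_map_eq_of_infinite (fun n : ℕ => x ^ n)
  wlog hlt : i < j generalizing i j
  · exact this j i hij.symm h.symm (by omega)
  obtain ⟨k, rfl⟩ := Nat.exists_eq_add_of_lt hlt
  have h' : x ^ i = x ^ (i + (k + 1)) := h
  -- From exponent `i` on, the powers of `x` are periodic with period `k + 1`.
  have hper : ∀ m l, x ^ (i + l) = x ^ (i + l + m * (k + 1)) := by
    intro m l
    induction m with
    | zero => simp
    | succ m ih =>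
      calc x ^ (i + l) = x ^ i * x ^ (l + m * (k + 1)) := by rw [ih, ← pow_add]; congr 1; ring
        _ = x ^ (i + l + (m + 1) * (k + 1)) := by rw [h', ← pow_add]; congr 1; ring
  refine ⟨(i + 1) * (k + 1), by positivity, ?_⟩
  have := hper (i + 1) ((i + 1) * (k + 1) - i)
  have hle : i ≤ (i + 1) * (k + 1) := by nlinarith
  rw [Nat.add_sub_cancel' hle] at this
  rw [← pow_add, ← this]

/-- Self-maps of two finite types have a common positive iterate at which both are idempotent. -/
lemma exists_pos_iterate_idempotent {R C : Type*} [Finite R] [Finite C]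
    (F : R → R) (G : C → C) :
    ∃ n, (∀ r, F^[n + 1] (F^[n + 1] r) = F^[n + 1] r) ∧
      ∀ c, G^[n + 1] (G^[n + 1] c) = G^[n + 1] c := by
  have : Finite (Function.End R) := inferInstanceAs (Finite (R → R))
  have : Finite (Function.End C) := inferInstanceAs (Finite (C → C))
  obtain ⟨n, hn, h⟩ := exists_pos_pow_idempotent
    ((F, G) : Function.End R × Function.End C)
  obtain ⟨m, rfl⟩ := Nat.exists_eq_succ_of_ne_zero hn.ne'
  refine ⟨m, fun r => ?_, fun c => ?_⟩
  · have := congrFun (congrArg Prod.fst h) r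
    exact ((end_pow_apply F _ _).symm.trans (congrArg _ (end_pow_apply F _ r).symm)).trans
      (this.trans (end_pow_apply F _ r))
  · have := congrFun (congrArg Prod.snd h) c
    exact ((end_pow_apply G _ _).symm.trans (congrArg _ (end_pow_apply G _ c).symm)).trans
      (this.trans (end_pow_apply G _ c))

/-- In a weak GSP every row, inside or outside, is dominated by a row of the GSP; the domination
is realised by a map on all rows. The same holds for columns. -/
lemma IsWeakGSP.exists_maps_s3 {R C : Type*} [Fintype R] [Fintype C] [DecidableEq R] [DecidableEq C]
    {a : R → C → ℝ} {R' : Finset R} {C' : Finset C} (h : IsWeakGSP a R' C') :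
    ∃ (f : R → R) (g : C → C), (∀ r, f r ∈ R') ∧ (∀ c, g c ∈ C') ∧
      (∀ r, ∀ c ∈ C', a r c ≤ a (f r) c) ∧ (∀ c, ∀ r ∈ R', a r (g c) ≤ a r c) := by
  obtain ⟨-, -, hR, hC⟩ := h
  have hR' : ∀ r, ∃ r1 ∈ R', ∀ c ∈ C', a r c ≤ a r1 c := fun r => by
    by_cases hr : r ∈ R'
    · exact ⟨r, hr, fun _ _ => le_rfl⟩
    · exact hR r (by simp [hr])
  have hC' : ∀ c, ∃ c1 ∈ C', ∀ r ∈ R', a r c1 ≤ a r c := fun c => by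
    by_cases hc : c ∈ C'
    · exact ⟨c, hc, fun _ _ => le_rfl⟩
    · exact hC c (by simp [hc])
  choose f hf hf' using hR'
  choose g hg hg' using hC'
  exact ⟨f, g, hf, hg, hf', hg'⟩

/-- Only the first product has to be minimal for the inequalities between cardinalities. -/
lemma IsWeakSaddle.card_le {R C : Type*} [Fintype R] [Fintype C] [DecidableEq R] [DecidableEq C]
    {a : R → C → ℝ} {R1 R2 : Finset R} {C1 C2 : Finset C}
    (h1 : IsWeakSaddle a R1 C1) (h2 : IsWeakGSP a R2 C2) :
    R1.card ≤ R2.card ∧ C1.card ≤ C2.card := by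
  obtain ⟨hG, hmin⟩ := h1
  obtain ⟨f1, g1, hf1, hg1, df1, dg1⟩ := hG.exists_maps_s3
  obtain ⟨f2, g2, hf2, hg2, df2, dg2⟩ := h2.exists_maps_s3
  have key : ∀ r ∈ R1, ∀ c ∈ C1, a r ((g1 ∘ g2) c) ≤ a ((f1 ∘ f2) r) c := fun r hr c hc =>
    calc a r (g1 (g2 c)) ≤ a r (g2 c) := dg1 _ r hr
      _ ≤ a (f2 r) (g2 c) := df2 r _ (hg2 c)
      _ ≤ a (f2 r) c := dg2 c _ (hf2 r)
      _ ≤ a (f1 (f2 r)) c := df1 _ c hc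
  have memF : ∀ n r, (f1 ∘ f2)^[n + 1] r ∈ R2.image f1 := fun n r => by
    rw [Function.iterate_succ_apply']
    exact Finset.mem_image_of_mem _ (hf2 _)
  have memG : ∀ n c, (g1 ∘ g2)^[n + 1] c ∈ C2.image g1 := fun n c => by
    rw [Function.iterate_succ_apply']
    exact Finset.mem_image_of_mem _ (hg2 _)
  have subR : R2.image f1 ⊆ R1 := Finset.image_subset_iff.2 fun r _ => hf1 r
  have subC : C2.image g1 ⊆ C1 := Finset.image_subset_iff.2 fun c _ => hg1 c
  have iter : ∀ n, ∀ r ∈ R1, ∀ c ∈ C1,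
      a r ((g1 ∘ g2)^[n] c) ≤ a ((f1 ∘ f2)^[n] r) c := by
    intro n
    induction n with
    | zero => exact fun r _ c _ => le_rfl
    | succ n ih =>
      intro r hr c hc
      have hc' : (g1 ∘ g2)^[n] c ∈ C1 := by
        cases n with
        | zero => exact hc
        | succ n => exact subC (memG n c)
      rw [Function.iterate_succ_apply', Function.iterate_succ_apply]
      exact (key r hr _ hc').trans (ih _ (hf1 _) c hc)
  obtain ⟨n, idF, idG⟩ := exists_pos_iterate_idempotent (f1 ∘ f2) (g1 ∘ g2)
  have it := iter (n + 1)
  have mF := memF n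
  have mG := memG n
  generalize (f1 ∘ f2)^[n + 1] = e at idF it mF
  generalize (g1 ∘ g2)^[n + 1] = d at idG it mG
  have sR : R1.image e ⊆ R2.image f1 := Finset.image_subset_iff.2 fun r _ => mF r
  have sC : C1.image d ⊆ C2.image g1 := Finset.image_subset_iff.2 fun c _ => mG c
  -- `d` fixes the columns of its image, so there `a r c = a r (d c) ≤ a (e r) c`.
  have gsp : IsWeakGSP a (R1.image e) (C1.image d) := by
    refine ⟨hG.1.image e, hG.2.1.image d, fun r _ => ?_, fun c _ => ?_⟩
    · refine ⟨e (f1 r), Finset.mem_image_of_mem _ (hf1 r), fun c hc => ?_⟩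
      have hc1 : c ∈ C1 := subC (sC hc)
      obtain ⟨c, -, rfl⟩ := Finset.mem_image.1 hc
      have := it (f1 r) (hf1 r) _ hc1
      rw [idG] at this
      exact (df1 r _ hc1).trans this
    · refine ⟨d (g1 c), Finset.mem_image_of_mem _ (hg1 c), fun r hr => ?_⟩
      have hr1 : r ∈ R1 := subR (sR hr)
      obtain ⟨r, -, rfl⟩ := Finset.mem_image.1 hr
      have := it _ hr1 (g1 c) (hg1 c)
      rw [idF] at this
      exact this.trans (dg1 c _ hr1)
  obtain ⟨eR, eC⟩ := hmin _ _ (sR.trans subR) (sC.trans subC) gsp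
  rw [eR] at sR
  rw [eC] at sC
  exact ⟨(Finset.card_le_card sR).trans Finset.card_image_le,
    (Finset.card_le_card sC).trans Finset.card_image_le⟩

theorem weakSaddle_card_eq
    {R C : Type*} [Fintype R] [Fintype C] [Nonempty R] [Nonempty C]
    [DecidableEq R] [DecidableEq C]
    (a : R → C → ℝ) (R1 R2 : Finset R) (C1 C2 : Finset C)
    (h1 : IsWeakSaddle a R1 C1) (h2 : IsWeakSaddle a R2 C2) :
    R1.card = R2.card ∧ C1.card = C2.card := by
  have h := h1.card_le h2.1
  have h' := h2.card_le h1.1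
  exact ⟨h.1.antisymm h'.1, h.2.antisymm h'.2⟩
end

section
/- Every confrontation game contains a unique weak saddle; that is, in a confrontation game there exists exactly one product R' × C' of nonempty subsets of rows and columns that is a weak saddle. -/
/-- Along a sequence in which `x (n + 1) ∈ M n` dominates `x n` with respect to `W n`, every term
from index `1` on has nonnegative payoff against all its predecessors from index `1` on, provided
`hMW` holds: it says that either the last domination step can be evaluated at the earlier term, or
the domination step leaving the earlier term can be evaluated at the later one. -/
lemma later_beats_earlier {X : Type*} (a : X → X → ℝ)
    (hskew : ∀ i j, a i j = -a j i) (M W : ℕ → Finset X) (x : ℕ → X)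
    (hmem : ∀ n, x (n + 1) ∈ M n)
    (hdom : ∀ n, ∀ c ∈ W n, a (x n) c ≤ a (x (n + 1)) c)
    (hMW : ∀ i j, M i = W j ∨ M j = W (i + 1)) (d : ℕ) :
    ∀ i, 0 ≤ a (x (i + d + 1)) (x (i + 1)) := by
  induction d with
  | zero =>
    intro i
    have := hskew (x (i + 1)) (x (i + 1))
    simp only [add_zero]
    linarith
  | succ d ih =>
    intro i
    rcases hMW i (i + d + 1) with h | h
    · have h1 := hdom (i + d + 1) (x (i + 1)) (h ▸ hmem i)
      exact (ih i).trans h1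
    · have h1 := hdom (i + 1) (x (i + d + 1 + 1)) (h ▸ hmem (i + d + 1))
      have h2 := ih (i + 1)
      rw [show i + 1 + d + 1 = i + d + 1 + 1 by omega] at h2
      have h3 := hskew (x (i + 1)) (x (i + d + 1 + 1))
      have h4 := hskew (x (i + 1 + 1)) (x (i + d + 1 + 1))
      change 0 ≤ a (x (i + d + 1 + 1)) (x (i + 1))
      linarith

/-- If every element has a dominator in `P` with respect to `U` and one in `Q` with respect to `V`,
where `(U, V)` is `(P, Q)` or `(Q, P)`, then every element has a dominator in `P ∩ Q` with respect
to `P ∩ Q`. -/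
lemma exists_dominator_inter {X : Type*} [Finite X] [DecidableEq X] (a : X → X → ℝ)
    (hskew : ∀ i j, a i j = -a j i) (hzero : ∀ i j, a i j = 0 ↔ i = j)
    (P Q U V : Finset X)
    (hP : ∀ x, ∃ y ∈ P, ∀ c ∈ U, a x c ≤ a y c)
    (hQ : ∀ x, ∃ y ∈ Q, ∀ c ∈ V, a x c ≤ a y c)
    (hUV : (U = P ∧ V = Q) ∨ (U = Q ∧ V = P)) (x₀ : X) :
    ∃ y ∈ P ∩ Q, ∀ c ∈ P ∩ Q, a x₀ c ≤ a y c := by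
  choose f hfP hfU using hP
  choose g hgQ hgV using hQ
  let M : ℕ → Finset X := fun n => if Even n then P else Q
  let W : ℕ → Finset X := fun n => if Even n then U else V
  let x : ℕ → X := fun n => Nat.rec x₀ (fun n y => if Even n then f y else g y) n
  have hx : ∀ n, x (n + 1) = if Even n then f (x n) else g (x n) := fun n => rfl
  have hmem : ∀ n, x (n + 1) ∈ M n := by
    intro n
    rw [hx]
    by_cases h : Even n <;> simp [M, h, hfP, hgQ]
  have hdom : ∀ n, ∀ c ∈ W n, a (x n) c ≤ a (x (n + 1)) c := by
    intro n c hc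
    rw [hx]
    by_cases h : Even n
    · simp only [W, h, if_true] at hc ⊢
      exact hfU _ c hc
    · simp only [W, h, if_false] at hc ⊢
      exact hgV _ c hc
  have hMW : ∀ i j, M i = W j ∨ M j = W (i + 1) := by
    intro i j
    rcases hUV with ⟨rfl, rfl⟩ | ⟨rfl, rfl⟩ <;> by_cases hi : Even i <;> by_cases hj : Even j <;>
      simp [M, W, hi, hj, Nat.even_add_one]
  have hbeat := later_beats_earlier a hskew M W x hmem hdom hMW
  have hrep : ∃ i j, i < j ∧ x (i + 1) = x (j + 1) := by
    obtain ⟨i, j, hij, h⟩ := Finite.exists_ne_map_eq_of_infinite (fun n => x (n + 1))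
    rcases lt_or_gt_of_ne hij with hlt | hlt
    · exact ⟨i, j, hlt, h⟩
    · exact ⟨j, i, hlt, h.symm⟩
  obtain ⟨i, j, hij, hxij⟩ := hrep
  -- `x (i + 2)` and `x (i + 1) = x (j + 1)` have nonnegative payoff against each other.
  have hstat : x (i + 1 + 1) = x (i + 1) := by
    have h1 := hbeat 1 i
    have h2 := hbeat (j - (i + 1)) (i + 1)
    rw [show i + 1 + (j - (i + 1)) + 1 = j + 1 by omega, ← hxij] at h2
    have h3 := hskew (x (i + 1)) (x (i + 1 + 1))
    exact (hzero _ _).1 (by linarith)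
  have hin : x (i + 1) ∈ P ∩ Q := by
    have h1 := hmem i
    have h2 := hmem (i + 1)
    rw [hstat] at h2
    by_cases hi : Even i <;> simp [M, hi, Nat.even_add_one] at h1 h2 <;> simp [h1, h2]
  refine ⟨x (i + 1), hin, fun c hc => ?_⟩
  have hcW : ∀ n, c ∈ W n := by
    rw [Finset.mem_inter] at hc
    intro n
    rcases hUV with ⟨rfl, rfl⟩ | ⟨rfl, rfl⟩ <;> by_cases hn : Even n <;> simp [W, hn, hc]
  exact (monotone_nat_of_le_succ (f := fun n => a (x n) c) fun n => hdom n c (hcW n))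
    (Nat.zero_le (i + 1))

/-- In a symmetric game a weak GSP is a pair of sets each of which contains, for every strategy
`x`, a row dominating `x` with respect to the other set. Nonemptiness is then automatic. -/
lemma isWeakGSP_iff_s5 {X : Type*} [Fintype X] [Nonempty X] [DecidableEq X] (a : X → X → ℝ)
    (hskew : ∀ i j, a i j = -a j i) (A B : Finset X) :
    IsWeakGSP a A B ↔ (∀ x, ∃ y ∈ A, ∀ c ∈ B, a x c ≤ a y c) ∧
      (∀ x, ∃ y ∈ B, ∀ c ∈ A, a x c ≤ a y c) := by
  constructor
  · rintro ⟨-, -, hr, hc⟩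
    refine ⟨fun x => ?_, fun x => ?_⟩
    · by_cases hx : x ∈ A
      · exact ⟨x, hx, fun _ _ => le_rfl⟩
      · exact hr x (by simp [hx])
    · by_cases hx : x ∈ B
      · exact ⟨x, hx, fun _ _ => le_rfl⟩
      · obtain ⟨y, hy, h⟩ := hc x (by simp [hx])
        refine ⟨y, hy, fun c hcA => ?_⟩
        rw [hskew x c, hskew y c]
        exact neg_le_neg (h c hcA)
  · rintro ⟨hr, hc⟩
    obtain ⟨x₀⟩ := ‹Nonempty X›
    obtain ⟨y, hy, -⟩ := hr x₀
    obtain ⟨z, hz, -⟩ := hc x₀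
    refine ⟨⟨y, hy⟩, ⟨z, hz⟩, fun x _ => hr x, fun x _ => ?_⟩
    obtain ⟨w, hw, h⟩ := hc x
    refine ⟨w, hw, fun r hrA => ?_⟩
    rw [hskew r w, hskew r x]
    exact neg_le_neg (h r hrA)

/-- Every confrontation game (a symmetric zero-sum game with zeroes exactly on the
main diagonal) contains a unique weak saddle. -/
theorem confrontation_unique_weakSaddle
    {X : Type*} [Fintype X] [Nonempty X] [DecidableEq X] (a : X → X → ℝ)
    (hskew : ∀ i j, a i j = -a j i)
    (hzero : ∀ i j, a i j = 0 ↔ i = j) :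
    ∃! p : Finset X × Finset X, IsWeakSaddle a p.1 p.2 := by
  have hiff := isWeakGSP_iff_s5 a hskew
  have hsymm : ∀ A B, IsWeakSaddle a A B → A = B := by
    rintro A B ⟨hG, hmin⟩
    obtain ⟨h1, h2⟩ := (hiff A B).1 hG
    have h := exists_dominator_inter a hskew hzero A B B A h1 h2 (Or.inr ⟨rfl, rfl⟩)
    obtain ⟨hA, hB⟩ := hmin _ _ Finset.inter_subset_left Finset.inter_subset_right
      ((hiff _ _).2 ⟨h, h⟩)
    exact hA.symm.trans hB
  have huniq : ∀ S T, IsWeakSaddle a S S → IsWeakSaddle a T T → S = T := by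
    rintro S T ⟨hS, hSmin⟩ ⟨hT, hTmin⟩
    have h := exists_dominator_inter a hskew hzero S T S T ((hiff S S).1 hS).1
      ((hiff T T).1 hT).1 (Or.inl ⟨rfl, rfl⟩)
    have hG := (hiff _ _).2 ⟨h, h⟩
    have h1 := (hSmin _ _ Finset.inter_subset_left Finset.inter_subset_left hG).1
    have h2 := (hTmin _ _ Finset.inter_subset_right Finset.inter_subset_right hG).1
    exact h1.symm.trans h2
  have hex : ∃ p : Finset X × Finset X, IsWeakSaddle a p.1 p.2 := by
    have huniv : IsWeakGSP a Finset.univ Finset.univ :=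
      (hiff _ _).2 ⟨fun x => ⟨x, Finset.mem_univ x, fun _ _ => le_rfl⟩,
        fun x => ⟨x, Finset.mem_univ x, fun _ _ => le_rfl⟩⟩
    obtain ⟨p, hp⟩ := exists_minimal_of_wellFoundedLT
      (fun p : Finset X × Finset X => IsWeakGSP a p.1 p.2) ⟨(Finset.univ, Finset.univ), huniv⟩
    refine ⟨p, hp.prop, fun R C hR hC hG => ?_⟩
    have hle : p ≤ (R, C) := hp.le_of_le (y := (R, C)) hG ⟨hR, hC⟩
    exact ⟨hR.antisymm hle.1, hC.antisymm hle.2⟩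
  obtain ⟨⟨A, B⟩, hp⟩ := hex
  refine ⟨(A, B), hp, ?_⟩
  rintro ⟨A', B'⟩ hq
  obtain rfl := hsymm A B hp
  obtain rfl := hsymm A' B' hq
  obtain rfl := huniq A A' hp hq
  rfl
end

section
/- Every finite two-player zero-sum game contains a weak saddle; that is, there exist nonempty subsets R' ⊆ R and C' ⊆ C such that R' × C' is a weak saddle. -/
theorem exists_weakSaddle
    {R C : Type*} [Fintype R] [Fintype C] [Nonempty R] [Nonempty C]
    [DecidableEq R] [DecidableEq C] (a : R → C → ℝ) :
    ∃ (R' : Finset R) (C' : Finset C), R'.Nonempty ∧ C'.Nonempty ∧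
      IsWeakSaddle a R' C' := by
  -- Minimality is taken in the componentwise inclusion order on pairs `(R', C')`.
  obtain ⟨⟨R', C'⟩, hmin⟩ :=
    (Set.toFinite {p : Finset R × Finset C | IsWeakGSP a p.1 p.2}).exists_minimal
      ⟨(Finset.univ, Finset.univ), Finset.univ_nonempty, Finset.univ_nonempty,
        by simp [RowsWeaklyDominate], by simp [ColsWeaklyDominate]⟩
  have hG : IsWeakGSP a R' C' := hmin.prop
  refine ⟨R', C', hG.1, hG.2.1, hG, fun R'' C'' hR hC h => ?_⟩
  have hle : (R', C') ≤ (R'', C'') := hmin.le_of_le (y := (R'', C'')) h ⟨hR, hC⟩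
  exact ⟨hR.antisymm hle.1, hC.antisymm hle.2⟩
end

section
/- Let A be a finite two-player zero-sum game with row set R and column set C, and let R' × C' be a weak GSP of A. Let p : R → ℝ and q : C → ℝ be mixed strategies (nonnegative functions summing to 1) with p supported on R' and q supported on C', such that (p, q) is a Nash equilibrium of the subgame A restricted to R' × C' (i.e., for every r ∈ R', Σ_{c∈C'} q(c)·a_{r,c} ≤ Σ_{r'∈R', c∈C'} p(r')·q(c)·a_{r',c}, and for every c ∈ C', Σ_{r∈R'} p(r)·a_{r,c} ≥ Σ_{r∈R', c'∈C'} p(r)·q(c')·a_{r,c'}). Then (p, q) is a Nash equilibrium of A: for every r ∈ R, Σ_{c∈C} q(c)·a_{r,c} ≤ Σ_{r'∈R, c∈C} p(r')·q(c)·a_{r',c}, and for every c ∈ C, Σ_{r∈R} p(r)·a_{r,c} ≥ Σ_{r∈R, c'∈C} p(r)·q(c')·a_{r,c'}. -/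
theorem weakGSP_nash_extends
    {R C : Type*} [Fintype R] [Fintype C] [Nonempty R] [Nonempty C]
    [DecidableEq R] [DecidableEq C]
    (a : R → C → ℝ) (R' : Finset R) (C' : Finset C)
    (hGSP : IsWeakGSP a R' C')
    (p : R → ℝ) (q : C → ℝ)
    (hp0 : ∀ r, 0 ≤ p r) (hp1 : ∑ r, p r = 1) (hpsupp : ∀ r ∉ R', p r = 0)
    (hq0 : ∀ c, 0 ≤ q c) (hq1 : ∑ c, q c = 1) (hqsupp : ∀ c ∉ C', q c = 0)
    (hrow : ∀ r ∈ R',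
      ∑ c ∈ C', q c * a r c ≤ ∑ r' ∈ R', ∑ c ∈ C', p r' * q c * a r' c)
    (hcol : ∀ c ∈ C',
      ∑ r ∈ R', ∑ c' ∈ C', p r * q c' * a r c' ≤ ∑ r ∈ R', p r * a r c) :
    (∀ r : R, ∑ c, q c * a r c ≤ ∑ r', ∑ c, p r' * q c * a r' c) ∧
    (∀ c : C, ∑ r, ∑ c', p r * q c' * a r c' ≤ ∑ r, p r * a r c) := by
  obtain ⟨-, -, hR, hC⟩ := hGSP
  have hpsum : ∀ f : R → ℝ, ∑ r, p r * f r = ∑ r ∈ R', p r * f r := fun f =>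
    (Finset.sum_subset (Finset.subset_univ R') fun r _ hr => by simp [hpsupp r hr]).symm
  have hqsum : ∀ f : C → ℝ, ∑ c, q c * f c = ∑ c ∈ C', q c * f c := fun f =>
    (Finset.sum_subset (Finset.subset_univ C') fun c _ hc => by simp [hqsupp c hc]).symm
  have hval : ∑ r, ∑ c, p r * q c * a r c = ∑ r ∈ R', ∑ c ∈ C', p r * q c * a r c := by
    simp only [mul_assoc, ← Finset.mul_sum, hqsum, hpsum]
  rw [hval]
  refine ⟨fun r => ?_, fun c => ?_⟩
  · rw [hqsum]
    by_cases hr : r ∈ R'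
    · exact hrow r hr
    · obtain ⟨r1, hr1, hdom⟩ := hR r (by simpa using hr)
      exact (Finset.sum_le_sum fun c hc =>
        mul_le_mul_of_nonneg_left (hdom c hc) (hq0 c)).trans (hrow r1 hr1)
  · rw [hpsum]
    by_cases hc : c ∈ C'
    · exact hcol c hc
    · obtain ⟨c1, hc1, hdom⟩ := hC c (by simpa using hc)
      exact (hcol c1 hc1).trans (Finset.sum_le_sum fun r hr =>
        mul_le_mul_of_nonneg_left (hdom r hr) (hp0 r))
end
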